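/- arXiv:2510.00616 — 3 statements merged into one kernel-verified Lean document; each statement's English description precedes it below -/
import Mathlib

section
/- For every nonnegative integer n and every rational number x, one has B(x, n) = S_n(x) + S_{n−1}(x−1), where S_n(t) := Σ_{m=0}^{n} B(t−m, m) · C(m, n−m) for n ≥ 0 and S_n(t) := 0 for n < 0, B(t,k) is the generalized binomial coefficient t(t−1)⋯(t−k+1)/k!, and C(a,b) is the ordinary binomial coefficient of nonnegative integers. -/
/-- `S n t = ∑_{m=0}^{n} B(t - m, m) * C(m, n - m)` for `n ≥ 0`, and `0` for `n < 0`. -/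
noncomputable def S (n : ℤ) (t : ℚ) : ℚ :=
  if 0 ≤ n then
    ∑ m ∈ Finset.range (n.toNat + 1), Ring.choose (t - m) m * (m.choose (n.toNat - m) : ℚ)
  else 0

open Polynomial in
/-- `S` on natural indices, with `C(m, n - m)` read off as a coefficient of `(X + X ^ 2) ^ m`. -/
noncomputable def coeffSum (n : ℕ) (t : ℚ) : ℚ :=
  ∑ m ∈ Finset.range (n + 1), Ring.choose (t - m) m * ((X + X ^ 2 : ℚ[X]) ^ m).coeff n

section Coefficients

open Polynomial

theorem coeff_X_add_X_sq_pow (m n : ℕ) :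
    ((X + X ^ 2 : ℚ[X]) ^ m).coeff n = if m ≤ n then (m.choose (n - m) : ℚ) else 0 := by
  rw [show (X + X ^ 2 : ℚ[X]) = X * (1 + X) by ring, mul_pow, coeff_X_pow_mul',
    coeff_one_add_X_pow]

theorem coeff_X_add_X_sq_pow_succ (m n : ℕ) :
    ((X + X ^ 2 : ℚ[X]) ^ (m + 1)).coeff (n + 2) =
      ((X + X ^ 2 : ℚ[X]) ^ m).coeff (n + 1) + ((X + X ^ 2 : ℚ[X]) ^ m).coeff n := by
  rw [show (X + X ^ 2 : ℚ[X]) ^ (m + 1) = (X + X ^ 2) ^ m * X + (X + X ^ 2) ^ m * X ^ 2 by ring,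
    coeff_add, coeff_mul_X, coeff_mul_X_pow]

/-- Coefficient form of `(1 + 2X) (w ^ (m + 1))' = (m + 1) (w ^ m + 4 w ^ (m + 1))`
for `w = X + X ^ 2`. -/
theorem coeff_derivative_X_add_X_sq_pow (m n : ℕ) :
    (n + 1) * ((X + X ^ 2 : ℚ[X]) ^ (m + 1)).coeff (n + 1) +
        2 * n * ((X + X ^ 2 : ℚ[X]) ^ (m + 1)).coeff n =
      (m + 1) * (((X + X ^ 2 : ℚ[X]) ^ m).coeff n +
        4 * ((X + X ^ 2 : ℚ[X]) ^ (m + 1)).coeff n) := by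
  have key : derivative ((X + X ^ 2 : ℚ[X]) ^ (m + 1)) +
      C 2 * (X * derivative ((X + X ^ 2 : ℚ[X]) ^ (m + 1))) =
      C ((m : ℚ) + 1) * ((X + X ^ 2) ^ m + C 4 * (X + X ^ 2) ^ (m + 1)) := by
    rw [derivative_pow_succ]
    simp only [derivative_X, derivative_X_pow, map_add, map_natCast, map_one,
      map_ofNat]
    push_cast
    ring
  have h := congrArg (fun p : ℚ[X] => p.coeff n) key
  cases n with
  | zero => simp [coeff_derivative] at h ⊢; linarith
  | succ n =>
    simp only [coeff_add, coeff_C_mul, coeff_X_mul, coeff_derivative] at h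
    push_cast at h ⊢
    linarith

theorem coeffSum_eq_sum_range {n N : ℕ} (h : n < N) (t : ℚ) :
    coeffSum n t =
      ∑ m ∈ Finset.range N, Ring.choose (t - m) m * ((X + X ^ 2 : ℚ[X]) ^ m).coeff n := by
  refine Finset.sum_subset (Finset.range_subset_range.2 h) fun m _ hm => ?_
  rw [coeff_X_add_X_sq_pow, if_neg (by simpa using hm), mul_zero]

theorem S_natCast (n : ℕ) (t : ℚ) : S n t = coeffSum n t := by
  simp only [S, coeffSum, Int.natCast_nonneg, if_true, Int.toNat_natCast]
  refine Finset.sum_congr rfl fun m hm => ?_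
  rw [coeff_X_add_X_sq_pow, if_pos (Finset.mem_range_succ_iff.1 hm)]

theorem coeffSum_zero (t : ℚ) : coeffSum 0 t = 1 := by
  simp [coeffSum]

theorem coeffSum_one (t : ℚ) : coeffSum 1 t = t - 1 := by
  simp [coeffSum, Finset.sum_range_succ, coeff_one]

theorem choose_succ_eq_add (t : ℚ) (k : ℕ) :
    Ring.choose t (k + 1) = Ring.choose (t - 1) k + Ring.choose (t - 1) (k + 1) := by
  simpa using Ring.choose_succ_succ (t - 1) k

theorem coeffSum_add_two (n : ℕ) (t : ℚ) :
    coeffSum (n + 2) t =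
      coeffSum (n + 2) (t - 1) + coeffSum (n + 1) (t - 2) + coeffSum n (t - 2) := by
  have hconst : ((X + X ^ 2 : ℚ[X]) ^ 0).coeff (n + 2) = 0 := by simp [coeff_one]
  rw [coeffSum_eq_sum_range (N := n + 4) (by lia), coeffSum_eq_sum_range (N := n + 4) (by lia),
    coeffSum_eq_sum_range (N := n + 3) (by lia), coeffSum_eq_sum_range (N := n + 3) (by lia),
    Finset.sum_range_succ', Finset.sum_range_succ' (n := n + 3), hconst, mul_zero, mul_zero,
    add_zero, add_zero, ← Finset.sum_add_distrib, ← Finset.sum_add_distrib]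
  refine Finset.sum_congr rfl fun m _ => ?_
  rw [choose_succ_eq_add, coeff_X_add_X_sq_pow_succ]
  push_cast
  rw [show t - (m + 1) - 1 = t - 2 - m by ring, show t - 1 - ((m : ℚ) + 1) = t - 2 - m by ring]
  ring

theorem choose_neg_one_sub (m : ℕ) :
    Ring.choose (-1 - m : ℚ) m = (-1) ^ m * m.centralBinom := by
  rw [show (-1 - m : ℚ) = -(m + 1) by ring, Ring.choose_neg,
    show ((m : ℚ) + 1 + m - 1) = ((2 * m : ℕ) : ℚ) by push_cast; ring, Ring.choose_natCast,
    ← Nat.centralBinom_eq_two_mul_choose, Units.smul_def, zsmul_eq_mul]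
  simp [Int.negOnePow_def]

theorem succ_mul_choose_neg_one_sub (m : ℕ) :
    (m + 1) * Ring.choose (-1 - (m + 1 : ℕ) : ℚ) (m + 1) =
      -2 * (2 * m + 1) * Ring.choose (-1 - m : ℚ) m := by
  have h : ((m : ℚ) + 1) * (m + 1).centralBinom = 2 * (2 * m + 1) * m.centralBinom := by
    exact_mod_cast Nat.succ_mul_centralBinom_succ m
  rw [choose_neg_one_sub, choose_neg_one_sub, pow_succ]
  linear_combination (-(-1) ^ m) * h

theorem coeffSum_succ_neg_one (n : ℕ) : coeffSum (n + 1) (-1) + 2 * coeffSum n (-1) = 0 := by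
  set a : ℕ → ℚ := fun m => Ring.choose (-1 - m : ℚ) m with ha
  set c : ℕ → ℕ → ℚ := fun m n => ((X + X ^ 2 : ℚ[X]) ^ m).coeff n with hc
  have hs {k N : ℕ} (h : k < N) : coeffSum k (-1) = ∑ m ∈ Finset.range N, a m * c m k :=
    coeffSum_eq_sum_range h _
  have partial_sum (N : ℕ) :
      ∑ m ∈ Finset.range (N + 1), a m * ((n + 1) * c m (n + 1) + 2 * n * c m n) +
        2 * ∑ m ∈ Finset.range (N + 1), a m * c m n = (4 * N + 2) * (a N * c N n) := by
    induction N with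
    | zero =>
      cases n <;> simp [ha, hc, coeff_one]
    | succ N ih =>
      rw [Finset.sum_range_succ, Finset.sum_range_succ (n := N + 1)]
      have h1 : ((n : ℚ) + 1) * c (N + 1) (n + 1) + 2 * n * c (N + 1) n =
        (N + 1) * (c N n + 4 * c (N + 1) n) := coeff_derivative_X_add_X_sq_pow N n
      have h2 : (N + 1) * a (N + 1) = -2 * (2 * N + 1) * a N := succ_mul_choose_neg_one_sub N
      push_cast
      linear_combination ih + a (N + 1) * h1 + c N n * h2
  have h := partial_sum (n + 1)
  have hvanish : c (n + 1) n = 0 := by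
    simp [hc, coeff_X_add_X_sq_pow]
  have hsplit : ∑ m ∈ Finset.range (n + 2), a m * ((n + 1) * c m (n + 1) + 2 * n * c m n) =
      (n + 1) * coeffSum (n + 1) (-1) + 2 * n * coeffSum n (-1) := by
    rw [hs (k := n + 1) (N := n + 2) (by lia), hs (k := n) (N := n + 2) (by lia),
      Finset.mul_sum, Finset.mul_sum, ← Finset.sum_add_distrib]
    exact Finset.sum_congr rfl fun m _ => by ring
  rw [hvanish, hsplit, ← hs (by lia)] at h
  have hn : (n : ℚ) + 1 ≠ 0 := by positivity
  apply mul_left_cancel₀ hn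
  linarith

end Coefficients

section PolynomialFunctions

open Polynomial

theorem eq_zero_of_eval_sub_one_eq {p : ℚ[X]} (h : ∀ x, p.eval x = p.eval (x - 1)) {a : ℚ}
    (ha : p.eval a = 0) : p = 0 := by
  have hroot (k : ℕ) : p.eval (a + k) = 0 := by
    induction k with
    | zero => simpa using ha
    | succ k ih =>
      rw [h, ← ih]
      congr 1
      push_cast
      ring
  refine p.eq_zero_of_infinite_isRoot
    ((Set.infinite_range_of_injective (f := fun k : ℕ => a + (k : ℚ)) ?_).mono ?_)
  · intro i j hij
    simpa using hij
  · rintro _ ⟨k, rfl⟩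
    exact hroot k

theorem exists_eval_eq_choose_add (k : ℕ) (b : ℚ) :
    ∃ p : ℚ[X], ∀ t, p.eval t = Ring.choose (t + b) k := by
  refine ⟨C ((k.factorial : ℚ)⁻¹) * ((descPochhammer ℤ k).map (Int.castRingHom ℚ)).comp (X + C b),
    fun t => ?_⟩
  rw [Ring.choose_eq_smul, ← aeval_eq_smeval, aeval_def, eval_mul, eval_C, eval_comp, eval_map]
  simp

theorem exists_eval_eq_coeffSum (n : ℕ) : ∃ p : ℚ[X], ∀ t, p.eval t = coeffSum n t := by
  choose p hp using exists_eval_eq_choose_add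
  refine ⟨∑ m ∈ Finset.range (n + 1), p m (-m) * C (((X + X ^ 2 : ℚ[X]) ^ m).coeff n),
    fun t => ?_⟩
  simp only [eval_finsetSum, eval_mul, hp, eval_C, coeffSum, sub_eq_add_neg]

end PolynomialFunctions

theorem coeffSum_succ_add_two_mul_of_sub {n : ℕ}
    (h : ∀ t, coeffSum (n + 1) t + 2 * coeffSum n t -
      (coeffSum (n + 1) (t - 1) + 2 * coeffSum n (t - 1)) = Ring.choose t n) (t : ℚ) :
    coeffSum (n + 1) t + 2 * coeffSum n t = Ring.choose (t + 1) (n + 1) := by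
  obtain ⟨p, hp⟩ := exists_eval_eq_coeffSum (n + 1)
  obtain ⟨q, hq⟩ := exists_eval_eq_coeffSum n
  obtain ⟨r, hr⟩ := exists_eval_eq_choose_add (n + 1) 1
  have hzero : p + 2 * q - r = 0 := by
    refine eq_zero_of_eval_sub_one_eq (a := -1) (fun x => ?_) ?_
    · have hx := h x
      have hc := Ring.choose_succ_succ x n
      simp only [Polynomial.eval_sub, Polynomial.eval_add, Polynomial.eval_mul,
        Polynomial.eval_ofNat, hp, hq, hr, sub_add_cancel]
      linarith
    · simp [hp, hq, hr, coeffSum_succ_neg_one]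
  have ht := congrArg (Polynomial.eval t) hzero
  simp only [Polynomial.eval_sub, Polynomial.eval_add, Polynomial.eval_mul,
    Polynomial.eval_ofNat, hp, hq, hr, Polynomial.eval_zero] at ht
  linarith

theorem coeffSum_succ_add_two_mul (n : ℕ) (t : ℚ) :
    coeffSum (n + 1) t + 2 * coeffSum n t = Ring.choose (t + 1) (n + 1) := by
  induction n using Nat.strong_induction_on generalizing t with
  | _ n ih =>
    refine coeffSum_succ_add_two_mul_of_sub (fun t => ?_) t
    match n with
    | 0 =>
      simp [coeffSum_zero, coeffSum_one]
    | 1 =>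
      rw [coeffSum_add_two 0 t]
      simp only [zero_add, coeffSum_zero, coeffSum_one, Ring.choose_one_right]
      ring
    | k + 2 =>
      have h1 := ih (k + 1) (by lia) (t - 2)
      have h0 := ih k (by lia) (t - 2)
      have hc := choose_succ_eq_add t (k + 1)
      rw [show t - 2 + 1 = t - 1 by ring] at h0 h1
      rw [coeffSum_add_two (k + 1) t, coeffSum_add_two k t]
      linarith

theorem coeffSum_add_coeffSum_sub_one (n : ℕ) (x : ℚ) :
    coeffSum (n + 1) x + coeffSum n (x - 1) = Ring.choose x (n + 1) := by
  induction n with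
  | zero => simp [coeffSum_zero, coeffSum_one]
  | succ n ih =>
    have h1 := coeffSum_succ_add_two_mul (n + 1) x
    have h0 := coeffSum_succ_add_two_mul n (x - 1)
    rw [sub_add_cancel] at h0
    rw [Ring.choose_succ_succ] at h1
    linarith

theorem stmt_7 (n : ℕ) (x : ℚ) :
    Ring.choose x n = S n x + S ((n : ℤ) - 1) (x - 1) := by
  cases n with
  | zero =>
    rw [S_natCast, coeffSum_zero]
    simp [S]
  | succ n =>
    rw [show ((n + 1 : ℕ) : ℤ) - 1 = (n : ℕ) by push_cast; ring, S_natCast, S_natCast,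
      coeffSum_add_coeffSum_sub_one]
end

section
/- For all nonnegative integers m and n and every rational number x, writing A_j(x) := ((x+1)^j + (x−1)^j)/2, one has x^(2n)·A_m(x) + A_{m+2n}(x) = Σ_{k=0}^{n} C(2n−k, k) · x^k · A_{m+k}(x) + Σ_{k=1}^{n} C(2n−k−1, k−1) · x^k · A_{m+k}(x) + (A_m(x) if n = 0 else 0). (The extra term for n = 0 encodes the convention C(−1,−1) = 1 used in the paper's formulation, in which the coefficient of x^k A_{m+k}(x) is C(2n−k, k) + C(2n−k−1, k−1).) -/
/-- `A j x = ((x + 1)^j + (x - 1)^j) / 2`. -/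
def A (j : ℕ) (x : ℚ) : ℚ := ((x + 1) ^ j + (x - 1) ^ j) / 2

/-- The Fibonacci-type polynomial `∑ₖ C(N - k, k) tᵏ`. -/
def fibSum (N : ℕ) (t : ℚ) : ℚ :=
  ∑ k ∈ Finset.range (N + 1), ((N - k).choose k : ℚ) * t ^ k

/-- Terms with `2 * k > N` vanish, so any long enough range computes `fibSum`. -/
lemma sum_range_eq_fibSum {N M : ℕ} (h : N < 2 * M) (t : ℚ) :
    ∑ k ∈ Finset.range M, ((N - k).choose k : ℚ) * t ^ k = fibSum N t := by
  have vanish : ∀ k, N < 2 * k → ((N - k).choose k : ℚ) * t ^ k = 0 := fun k hk => by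
    rw [Nat.choose_eq_zero_of_lt (by omega)]; simp
  unfold fibSum
  rcases le_total M (N + 1) with hM | hM
  · refine Finset.sum_subset (Finset.range_mono hM) fun k _ hk => vanish k ?_
    simp only [Finset.mem_range] at hk
    omega
  · refine (Finset.sum_subset (Finset.range_mono hM) fun k _ hk => vanish k ?_).symm
    simp only [Finset.mem_range] at hk
    omega

lemma fibSum_add_two (N : ℕ) (t : ℚ) :
    fibSum (N + 2) t = fibSum (N + 1) t + t * fibSum N t := by
  rw [← sum_range_eq_fibSum (M := N + 2 + 1) (by omega),
    ← sum_range_eq_fibSum (N := N + 1) (M := N + 2 + 1) (by omega),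
    ← sum_range_eq_fibSum (N := N) (M := N + 2) (by omega),
    Finset.sum_range_succ', Finset.sum_range_succ' _ (N + 2), Finset.mul_sum,
    add_right_comm, ← Finset.sum_add_distrib]
  congr 1
  refine Finset.sum_congr rfl fun k hk => ?_
  have pascal : (N + 2 - (k + 1)).choose (k + 1) =
      (N - k).choose k + (N + 1 - (k + 1)).choose (k + 1) := by
    rcases le_or_gt k N with hkN | hkN
    · rw [show N + 2 - (k + 1) = (N - k) + 1 by omega, Nat.choose_succ_succ',
        show N + 1 - (k + 1) = N - k by omega]
    · rw [Nat.choose_eq_zero_of_lt (by omega), Nat.choose_eq_zero_of_lt (by omega),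
        Nat.choose_eq_zero_of_lt (by omega)]
  rw [pascal]
  push_cast
  ring

/-- The Lucas-type combination of `fibSum` is a power sum of the roots of `z² = z + t`. -/
lemma fibSum_add_two_add_mul {a b t : ℚ} (hab : a + b = 1) (ht : t = -(a * b)) (N : ℕ) :
    fibSum (N + 2) t + t * fibSum N t = a ^ (N + 2) + b ^ (N + 2) := by
  obtain rfl : b = 1 - a := by linarith
  subst ht
  have h0 : fibSum 0 (-(a * (1 - a))) = 1 := by simp [fibSum]
  have h1 : fibSum 1 (-(a * (1 - a))) = 1 := by simp [fibSum, Finset.sum_range_succ]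
  induction N using Nat.twoStepInduction with
  | zero => rw [fibSum_add_two, h0, h1]; ring
  | one => rw [fibSum_add_two, fibSum_add_two, h0, h1]; ring
  | more N ih₀ ih₁ =>
    rw [fibSum_add_two (N + 2)]
    have hN := fibSum_add_two N (-(a * (1 - a)))
    linear_combination ih₁ - a * (1 - a) * ih₀ - a * (1 - a) * hN

lemma sum_choose_mul_pow_mul_pow {x y : ℚ} (hxy : (y - x) ^ 2 = 1) (m n : ℕ) :
    x ^ (2 * n) * y ^ m + y ^ (m + 2 * n) =
      (∑ k ∈ Finset.range (n + 1), ((2 * n - k).choose k : ℚ) * x ^ k * y ^ (m + k)) +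
        (∑ k ∈ Finset.Icc 1 n, ((2 * n - k - 1).choose (k - 1) : ℚ) * x ^ k * y ^ (m + k)) +
        (if n = 0 then y ^ m else 0) := by
  rcases n with _ | n
  · simp
  have first : ∑ k ∈ Finset.range (n + 1 + 1),
      ((2 * (n + 1) - k).choose k : ℚ) * x ^ k * y ^ (m + k) =
        y ^ m * fibSum (2 * n + 2) (x * y) := by
    rw [← sum_range_eq_fibSum (M := n + 1 + 1) (by omega), Finset.mul_sum]
    refine Finset.sum_congr rfl fun k _ => ?_
    rw [show 2 * (n + 1) = 2 * n + 2 by ring]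
    ring
  have second : ∑ k ∈ Finset.Icc 1 (n + 1),
      ((2 * (n + 1) - k - 1).choose (k - 1) : ℚ) * x ^ k * y ^ (m + k) =
        y ^ m * (x * y * fibSum (2 * n) (x * y)) := by
    rw [← sum_range_eq_fibSum (M := n + 1) (by omega), Finset.mul_sum, Finset.mul_sum,
      ← Finset.Ico_add_one_right_eq_Icc, Finset.sum_Ico_eq_sum_range]
    refine Finset.sum_congr rfl fun k _ => ?_
    rw [show 2 * (n + 1) - (1 + k) - 1 = 2 * n - k by omega, Nat.add_sub_cancel_left]
    ring
  have power_sum : fibSum (2 * n + 2) (x * y) + x * y * fibSum (2 * n) (x * y) =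
      y ^ (2 * n + 2) + x ^ (2 * n + 2) := by
    have even : Even (2 * n + 2) := ⟨n + 1, by ring⟩
    rcases eq_or_eq_neg_of_sq_eq_sq _ 1 (hxy.trans (one_pow 2).symm) with h | h
    · rw [fibSum_add_two_add_mul (a := y) (b := -x) (by linarith) (by ring), even.neg_pow]
    · rw [fibSum_add_two_add_mul (a := -y) (b := x) (by linarith) (by ring), even.neg_pow]
  rw [first, second, if_neg n.succ_ne_zero]
  linear_combination -y ^ m * power_sum

theorem stmt_9 (m n : ℕ) (x : ℚ) :
    x ^ (2 * n) * A m x + A (m + 2 * n) x =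
      (∑ k ∈ Finset.range (n + 1), ((2 * n - k).choose k : ℚ) * x ^ k * A (m + k) x) +
        (∑ k ∈ Finset.Icc 1 n, ((2 * n - k - 1).choose (k - 1) : ℚ) * x ^ k * A (m + k) x) +
        (if n = 0 then A m x else 0) := by
  have plus := sum_choose_mul_pow_mul_pow (x := x) (y := x + 1) (by ring) m n
  have minus := sum_choose_mul_pow_mul_pow (x := x) (y := x - 1) (by ring) m n
  have split (s : Finset ℕ) (c : ℕ → ℚ) : ∑ k ∈ s, c k * x ^ k * A (m + k) x =
      (∑ k ∈ s, c k * x ^ k * (x + 1) ^ (m + k) +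
        ∑ k ∈ s, c k * x ^ k * (x - 1) ^ (m + k)) / 2 := by
    rw [← Finset.sum_add_distrib, Finset.sum_div]
    refine Finset.sum_congr rfl fun k _ => ?_
    unfold A
    ring
  rw [split _ fun k => ((2 * n - k).choose k : ℚ),
    split _ fun k => ((2 * n - k - 1).choose (k - 1) : ℚ)]
  unfold A
  split_ifs at * <;> linear_combination (plus + minus) / 2
end

section
/- For all nonnegative integers m and n and every rational number x, writing A_j(x) := ((x+1)^j + (x−1)^j)/2, one has x^(2n+1)·A_m(x) + A_{m+2n+1}(x) = Σ_{k=0}^{n} C(2n−k, k) · (x^(k+1)·A_{m+k}(x) + x^k·A_{m+k+1}(x)), where C(a,b) denotes the ordinary binomial coefficient of nonnegative integers. -/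
open Finset in
/-- The Fibonacci-type recurrence for the weighted diagonal sums of Pascal's triangle. -/
theorem sum_antidiagonal_choose_mul_pow_add_two {R : Type*} [CommRing R] (t : R) (N : ℕ) :
    ∑ p ∈ antidiagonal (N + 2), (p.1.choose p.2 : R) * t ^ p.2 =
      ∑ p ∈ antidiagonal (N + 1), (p.1.choose p.2 : R) * t ^ p.2 +
        t * ∑ p ∈ antidiagonal N, (p.1.choose p.2 : R) * t ^ p.2 := by
  rw [Nat.antidiagonal_succ_succ', Nat.antidiagonal_succ']
  simp only [sum_cons, sum_map, Function.Embedding.prodMap, Function.Embedding.coeFn_mk,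
    Prod.map, Function.Embedding.refl_apply, Nat.choose_succ_succ, Nat.cast_add, add_mul,
    sum_add_distrib, mul_sum]
  simp [pow_succ, mul_comm]
  ring_nf

open Finset in
/-- Binet's formula for the weighted diagonal sums of Pascal's triangle. -/
theorem sub_mul_sum_antidiagonal_choose {R : Type*} [CommRing R] (r s : R) (h : r + s = 1)
    (N : ℕ) :
    (r - s) * ∑ p ∈ antidiagonal N, (p.1.choose p.2 : R) * (-(r * s)) ^ p.2 =
      r ^ (N + 1) - s ^ (N + 1) := by
  obtain rfl : s = 1 - r := by rw [← h]; ring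
  induction N using Nat.twoStepInduction with
  | zero => simp
  | one => simp [Nat.antidiagonal_succ]; ring
  | more N ih₀ ih₁ =>
    rw [sum_antidiagonal_choose_mul_pow_add_two, mul_add, ih₁, mul_left_comm, ih₀]
    ring

open Finset in
theorem sum_antidiagonal_two_mul_choose {R : Type*} [CommRing R] (t : R) (n : ℕ) :
    ∑ p ∈ antidiagonal (2 * n), (p.1.choose p.2 : R) * t ^ p.2 =
      ∑ k ∈ range (n + 1), ((2 * n - k).choose k : R) * t ^ k := by
  rw [← Nat.sum_antidiagonal_swap, Nat.sum_antidiagonal_eq_sum_range_succ_mk]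
  symm
  apply sum_subset
  · intro k hk
    simp only [mem_range] at hk ⊢
    omega
  · intro k _ hk
    simp only [mem_range] at hk
    simp [Nat.choose_eq_zero_of_lt (show 2 * n - k < k by omega)]

/-- If `x` and `y` differ by one, then `x ^ (2 * n + 1) + y ^ (2 * n + 1)` is `x + y` times a
diagonal sum of Pascal's triangle weighted by powers of `x * y`. -/
theorem pow_add_pow_eq_sum_choose {R : Type*} [CommRing R] (x y : R) (h : y - x = 1) (n : ℕ) :
    x ^ (2 * n + 1) + y ^ (2 * n + 1) =
      (x + y) * ∑ k ∈ Finset.range (n + 1), ((2 * n - k).choose k : R) * (x * y) ^ k := by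
  have key := sub_mul_sum_antidiagonal_choose y (-x) (by rw [← h]; ring) (2 * n)
  rw [sum_antidiagonal_two_mul_choose, Odd.neg_pow ⟨n, rfl⟩] at key
  rw [show x * y = -(y * -x) by ring]
  linear_combination -key


theorem stmt_10 (m n : ℕ) (x : ℚ) :
    x ^ (2 * n + 1) * A m x + A (m + 2 * n + 1) x =
      ∑ k ∈ Finset.range (n + 1),
        ((2 * n - k).choose k : ℚ) * (x ^ (k + 1) * A (m + k) x + x ^ k * A (m + k + 1) x) := by
  have h₁ := pow_add_pow_eq_sum_choose x (x + 1) (by ring) n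
  have h₂ := pow_add_pow_eq_sum_choose (x - 1) x (by ring) n
  calc
    _ = (x + 1) ^ m / 2 * (x ^ (2 * n + 1) + (x + 1) ^ (2 * n + 1)) +
        (x - 1) ^ m / 2 * ((x - 1) ^ (2 * n + 1) + x ^ (2 * n + 1)) := by
      unfold A
      ring
    _ = _ := by
      rw [h₁, h₂, Finset.mul_sum, Finset.mul_sum, Finset.mul_sum, Finset.mul_sum,
        ← Finset.sum_add_distrib]
      refine Finset.sum_congr rfl fun k _ => ?_
      unfold A
      rw [mul_pow, mul_pow]
      ring
end
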